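/- Let S be a finite set, and for each e ∈ S let w̄(e) ∈ [0,1], ŵ(e) ∈ [0,1], c(e) ≥ 0 with |w̄(e) − ŵ(e)| < c(e). Partition S into disjoint sets T (suboptimal items) and the rest, and let V be another finite set disjoint from T with weights w̄(e) ∈ [0,1] for e ∈ V. If ∏_{e∈T} min(ŵ(e)+c(e),1) ≥ ∏_{e∈V} min(ŵ(e)+c(e),1), then 2·Σ_{e∈T} c(e) ≥ ∏_{e∈V} w̄(e) − ∏_{e∈T} w̄(e). -/

import Mathlib

/-- A product of factors in `[0, 1]` grows by at most the total increase of its factors. -/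
theorem Finset.prod_sub_prod_le_sum_sub {ι : Type*} (s : Finset ι) (u v : ι → ℝ)
    (hv : ∀ i ∈ s, 0 ≤ v i) (hvu : ∀ i ∈ s, v i ≤ u i) (hu : ∀ i ∈ s, u i ≤ 1) :
    ∏ i ∈ s, u i - ∏ i ∈ s, v i ≤ ∑ i ∈ s, (u i - v i) := by
  induction s using Finset.cons_induction with
  | empty => simp
  | cons a s ha ih =>
    simp only [Finset.forall_mem_cons] at hv hvu hu
    rw [Finset.prod_cons, Finset.prod_cons, Finset.sum_cons]
    have hrec := ih hv.2 hvu.2 hu.2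
    have hmono : ∏ i ∈ s, v i ≤ ∏ i ∈ s, u i := Finset.prod_le_prod hv.2 hvu.2
    have hle_one : ∏ i ∈ s, v i ≤ 1 :=
      Finset.prod_le_one hv.2 fun i hi => (hvu.2 i hi).trans (hu.2 i hi)
    nlinarith [mul_nonneg (sub_nonneg.2 hu.1) (sub_nonneg.2 hmono),
      mul_nonneg (sub_nonneg.2 hvu.1) (sub_nonneg.2 hle_one)]

theorem stmt_19 (E : Type*) [DecidableEq E] (T V : Finset E) (hTV : Disjoint T V)
    (wbar what c : E → ℝ)
    (hw : ∀ e ∈ T ∪ V, 0 ≤ wbar e ∧ wbar e ≤ 1)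
    (hhat : ∀ e ∈ T ∪ V, 0 ≤ what e ∧ what e ≤ 1)
    (hc : ∀ e ∈ T ∪ V, 0 ≤ c e)
    (hclose : ∀ e ∈ T ∪ V, |wbar e - what e| < c e)
    (hUCB : ∏ e ∈ V, min (what e + c e) 1 ≤ ∏ e ∈ T, min (what e + c e) 1) :
    (∏ e ∈ V, wbar e) - ∏ e ∈ T, wbar e ≤ 2 * ∑ e ∈ T, c e := by
  have hT : ∀ e ∈ T, e ∈ T ∪ V := fun e he => Finset.mem_union_left V he
  have hV : ∀ e ∈ V, e ∈ T ∪ V := fun e he => Finset.mem_union_right T he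
  have hle : ∀ e ∈ T ∪ V, wbar e ≤ min (what e + c e) 1 := fun e he =>
    le_min (by linarith [(abs_lt.1 (hclose e he)).2]) (hw e he).2
  have hprodV : ∏ e ∈ V, wbar e ≤ ∏ e ∈ V, min (what e + c e) 1 :=
    Finset.prod_le_prod (fun e he => (hw e (hV e he)).1) fun e he => hle e (hV e he)
  have hprodT := Finset.prod_sub_prod_le_sum_sub T (fun e => min (what e + c e) 1) wbar
    (fun e he => (hw e (hT e he)).1) (fun e he => hle e (hT e he)) fun e _ => min_le_right _ _
  have hsum : ∑ e ∈ T, (min (what e + c e) 1 - wbar e) ≤ 2 * ∑ e ∈ T, c e := by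
    rw [Finset.mul_sum]
    refine Finset.sum_le_sum fun e he => ?_
    linarith [(abs_lt.1 (hclose e (hT e he))).1, min_le_left (what e + c e) 1]
  linarith
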